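/- Let q be an odd prime power and d ∈ F_q with d ≠ 0. Set h = (4X⁴ − 12d²X² + 8d³X − d⁴)/(2X(X − d)(2X − d)), viewed as a map h : P¹(F_q) → P¹(F_q). Then the number of points b ∈ P¹(F_q) whose fiber h⁻¹(b) has exactly 4 elements equals (q+1)/4 if q ≡ 3 (mod 4), and equals (q−1)/4 if q ≡ 1 (mod 4). In particular, h is (3, (q+1)/4)-good when q ≡ 3 (mod 4) and (3, (q−1)/4)-good when q ≡ 1 (mod 4). -/

import Mathlib

open Polynomial Finset

/-- The map `P¹(F) → P¹(F)` induced by the rational function `f/g`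
(with `none` playing the role of `∞`). -/
def ratEval {F : Type*} [Field F] [DecidableEq F] (f g : Polynomial F) :
    Option F → Option F
  | none =>
      if g.natDegree < f.natDegree then none
      else if f.natDegree = g.natDegree then some (f.leadingCoeff / g.leadingCoeff)
      else some 0
  | some x => if g.eval x = 0 then none else some (f.eval x / g.eval x)

/-!
The Möbius transformation `σ : x ↦ d² / (2(d - x))` has order four in `PGL₂(F)`, and the numerator
of `h(y) - h(x)` splits into four factors, which vanish for `y = x`, `y = σ x`, `y = σ² x` and
`x = σ y` respectively. Hence the fibers of `h` are the orbits of `σ`, and a fiber has four points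
unless `σ²` fixes it. The fixed points of `σ²` are `d(1 + i) / 2` with `i² = -1`, so the number `N`
of four-point fibers satisfies `4N = q + 1 - #{i | i² = -1} = q - χ₄(q)`.
-/

/-- Mathlib's `OnePoint F` is `Option F` by definition, so its points inherit decidable equality.
This is what lets `ratEval` act on the projective line on which `GL (Fin 2) F` acts. -/
instance {F : Type*} [DecidableEq F] : DecidableEq (OnePoint F) :=
  inferInstanceAs (DecidableEq (Option F))

section Counting

variable {α β : Type*} [Fintype α] [Fintype β] [DecidableEq β]

theorem card_filter_card_fiber_eq_mul (f : α → β) (n : ℕ) :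
    #{b | #{x | f x = b} = n} * n = #{x | #{y | f y = f x} = n} := by
  have hmaps : Set.MapsTo f ({x | #{y | f y = f x} = n} : Finset α)
      ({b | #{x | f x = b} = n} : Finset β) := fun x hx ↦ by simpa using hx
  rw [card_eq_sum_card_fiberwise hmaps, sum_const_nat]
  intro b hb
  rw [mem_filter_univ] at hb
  rw [filter_filter, ← hb]
  congr 1 with x
  simp only [mem_filter_univ, and_iff_right_iff_imp]
  rintro rfl
  rfl

end Counting

section GroupAction

variable {G α β : Type*} [Group G] [MulAction G α] {g : G}

theorem eq_of_mem_orbit_zpowers {f : α → β} (hf : ∀ x, f (g • x) = f x) {x y : α}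
    (hy : y ∈ MulAction.orbit (Subgroup.zpowers g) x) : f y = f x := by
  obtain ⟨⟨_, k, rfl⟩, rfl⟩ := hy
  change f (g ^ k • x) = f x
  refine zpow_induction_left (P := fun a ↦ f (a • x) = f x) (by rw [one_smul]) ?_ ?_ k
  · intro a ih
    rw [mul_smul, hf, ih]
  · intro a ih
    rw [← ih, ← hf, smul_smul, mul_inv_cancel_left]

theorem card_filter_mem_orbit_zpowers [Fintype α] (x : α)
    [DecidablePred (· ∈ MulAction.orbit (Subgroup.zpowers g) x)] :
    #{y | y ∈ MulAction.orbit (Subgroup.zpowers g) x} = MulAction.period g x := by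
  rw [MulAction.period, MulAction.minimalPeriod_eq_card, ← Fintype.card_subtype]

theorem period_eq_prime_pow_iff {p k : ℕ} [Fact p.Prime] {x : α} (h : g ^ p ^ (k + 1) • x = x) :
    MulAction.period g x = p ^ (k + 1) ↔ g ^ p ^ k • x ≠ x := by
  rw [← MulAction.isPeriodicPt_smul_iff] at h
  rw [Ne, ← MulAction.isPeriodicPt_smul_iff, MulAction.period]
  refine ⟨fun hp hk ↦ ?_, fun hk ↦ Function.minimalPeriod_eq_prime_pow hk h⟩
  have hp1 := (Fact.out : p.Prime).one_lt
  have := hp ▸ hk.minimalPeriod_le (by positivity)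
  exact absurd this (Nat.pow_lt_pow_succ hp1).not_ge

end GroupAction

section Moebius

open OnePoint

variable {K : Type*} [Field K] [DecidableEq K] {g : GL (Fin 2) K} {c : K}
  {M : Matrix (Fin 2) (Fin 2) K}

theorem smul_eq_self_of_coe_eq_smul_one (hg : (g : Matrix (Fin 2) (Fin 2) K) = c • 1)
    (x : OnePoint K) : g • x = x := by
  have hc : c ≠ 0 := by
    rintro rfl
    simpa [hg] using g.det_ne_zero
  cases x with
  | infty => simp [smul_infty_eq_self_iff, hg]
  | coe a => simp [smul_some_eq_ite, hg, hc]

variable (hc : c ≠ 0) (hg : (g : Matrix (Fin 2) (Fin 2) K) = c • M)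
include hc hg

theorem smul_coe_eq_infty_iff (a : K) : g • (a : OnePoint K) = ∞ ↔ M 1 0 * a + M 1 1 = 0 := by
  simp [smul_some_eq_ite, hg, hc, mul_assoc, ← mul_add]

theorem smul_infty_eq_coe_iff (b : K) : g • (∞ : OnePoint K) = b ↔ M 0 0 = b * M 1 0 := by
  have hdet : M.det ≠ 0 := fun h ↦ g.det_ne_zero (by rw [hg, Matrix.det_smul, h, mul_zero])
  rw [Matrix.det_fin_two] at hdet
  by_cases h : M 1 0 = 0
  · have : M 0 0 ≠ 0 := fun h0 ↦ hdet (by rw [h, h0]; ring)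
    simp [smul_infty_eq_ite, hg, h, this]
  · simp [smul_infty_eq_ite, hg, h, hc, mul_div_mul_left, div_eq_iff]

theorem smul_coe_eq_coe_iff (a b : K) :
    g • (a : OnePoint K) = b ↔ M 0 0 * a + M 0 1 = b * (M 1 0 * a + M 1 1) := by
  have hdet : M.det ≠ 0 := fun h ↦ g.det_ne_zero (by rw [hg, Matrix.det_smul, h, mul_zero])
  rw [Matrix.det_fin_two] at hdet
  by_cases h : M 1 0 * a + M 1 1 = 0
  · have : M 0 0 * a + M 0 1 ≠ 0 := fun h0 ↦
      hdet (by linear_combination M 0 0 * h - M 1 0 * h0)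
    simp [(smul_coe_eq_infty_iff hc hg a).mpr h, h, this]
  · simp [smul_some_eq_ite, hg, h, hc, mul_div_mul_left, div_eq_iff, mul_assoc, ← mul_add]

end Moebius

section RatEval

variable {F : Type*} [Field F] [DecidableEq F] {f g : F[X]}

theorem ratEval_none_of_natDegree_lt (h : g.natDegree < f.natDegree) :
    ratEval f g none = none := if_pos h

theorem ratEval_some_eq_none_iff (x : F) : ratEval f g (some x) = none ↔ g.eval x = 0 := by
  simp [ratEval]

theorem ratEval_some_eq_ratEval_some_iff {x y : F} (hx : f.eval x ≠ 0 ∨ g.eval x ≠ 0)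
    (hy : f.eval y ≠ 0 ∨ g.eval y ≠ 0) :
    ratEval f g (some x) = ratEval f g (some y) ↔
      f.eval x * g.eval y = f.eval y * g.eval x := by
  by_cases hgx : g.eval x = 0 <;> by_cases hgy : g.eval y = 0
  · simp [ratEval, hgx, hgy]
  · simp_all [ratEval]
  · simp_all [ratEval]
  · simp [ratEval, hgx, hgy, div_eq_div_iff]

end RatEval

section QuarterTurn

open OnePoint

variable {F : Type*} [Field F] {d : F}

/-- The Möbius transformation `x ↦ d² / (2(d - x))`, of order four in `PGL₂(F)`. It permutes the
poles of `quarticMap d` cyclically, as `∞ ↦ 0 ↦ d / 2 ↦ d ↦ ∞`. -/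
def quarterTurn (h2 : (2 : F) ≠ 0) (hd : d ≠ 0) : GL (Fin 2) F :=
  .mkOfDetNeZero !![0, d ^ 2; -2, 2 * d] (by simp [Matrix.det_fin_two, h2, hd])

variable (h2 : (2 : F) ≠ 0) (hd : d ≠ 0)

theorem coe_quarterTurn :
    (quarterTurn h2 hd : Matrix (Fin 2) (Fin 2) F) = !![0, d ^ 2; -2, 2 * d] :=
  rfl

theorem coe_quarterTurn_sq :
    (↑(quarterTurn h2 hd ^ 2) : Matrix (Fin 2) (Fin 2) F) = (2 * d) • !![-d, d ^ 2; -2, d] := by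
  rw [pow_two, Units.val_mul, coe_quarterTurn]
  ext i j
  fin_cases i <;> fin_cases j <;> simp <;> ring

theorem coe_quarterTurn_pow_four :
    (↑(quarterTurn h2 hd ^ 4) : Matrix (Fin 2) (Fin 2) F) = (-4 * d ^ 4) • 1 := by
  rw [pow_mul (quarterTurn h2 hd) 2 2, pow_two, Units.val_mul, coe_quarterTurn_sq]
  ext i j
  fin_cases i <;> fin_cases j <;> simp <;> ring

variable [DecidableEq F]

theorem quarterTurn_pow_four_smul (x : OnePoint F) : quarterTurn h2 hd ^ 4 • x = x :=
  smul_eq_self_of_coe_eq_smul_one (coe_quarterTurn_pow_four h2 hd) x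

theorem quarterTurn_sq_smul_infty_ne : quarterTurn h2 hd ^ 2 • (∞ : OnePoint F) ≠ ∞ := by
  rw [Ne, smul_infty_eq_self_iff, coe_quarterTurn_sq]
  simp [h2, hd]

theorem quarterTurn_sq_smul_coe_eq_self_iff (a : F) :
    quarterTurn h2 hd ^ 2 • (a : OnePoint F) = a ↔ (2 * a - d) ^ 2 = -d ^ 2 := by
  rw [smul_coe_eq_coe_iff (mul_ne_zero h2 hd) (coe_quarterTurn_sq h2 hd), ← mul_right_inj' h2]
  simp only [Matrix.of_apply, Matrix.cons_val_zero, Matrix.cons_val_one]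
  constructor <;> intro h <;> linear_combination h

theorem card_filter_quarterTurn_sq_smul_eq [Fintype F] :
    #{x : OnePoint F | quarterTurn h2 hd ^ 2 • x = x} = #{i : F | i ^ 2 = -1} := by
  symm
  refine card_bij (fun i _ ↦ ((d * (1 + i) / 2 : F) : OnePoint F)) ?_ ?_ ?_
  · intro i hi
    rw [mem_filter_univ] at hi ⊢
    rw [quarterTurn_sq_smul_coe_eq_self_iff]
    field_simp
    linear_combination hi
  · intro i _ j _ hij
    rw [OnePoint.coe_eq_coe] at hij
    field_simp at hij
    linear_combination hij
  · intro x hx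
    rw [mem_filter_univ] at hx
    cases x with
    | infty => exact absurd hx (quarterTurn_sq_smul_infty_ne h2 hd)
    | coe a =>
      rw [quarterTurn_sq_smul_coe_eq_self_iff] at hx
      refine ⟨(2 * a - d) / d, ?_, ?_⟩
      · rw [mem_filter_univ, div_pow, hx]
        field_simp
      · rw [OnePoint.coe_eq_coe]
        field_simp
        ring

end QuarterTurn

section QuarticMap

open OnePoint

variable {F : Type*} [Field F] (d : F)

/-- The numerator `4X⁴ - 12d²X² + 8d³X - d⁴` of the rational function under study. -/
noncomputable def quarticNum : F[X] :=
  C 4 * X ^ 4 - C (12 * d ^ 2) * X ^ 2 + C (8 * d ^ 3) * X - C (d ^ 4)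

/-- The denominator `2X(X - d)(2X - d)` of the rational function under study. -/
noncomputable def quarticDen : F[X] :=
  C 2 * X * (X - C d) * (C 2 * X - C d)

theorem eval_quarticNum (a : F) :
    (quarticNum d).eval a = 4 * a ^ 4 - 12 * d ^ 2 * a ^ 2 + 8 * d ^ 3 * a - d ^ 4 := by
  simp [quarticNum]

theorem eval_quarticDen (a : F) :
    (quarticDen d).eval a = 2 * a * (a - d) * (2 * a - d) := by
  simp [quarticDen]

variable {d}

theorem eval_quarticDen_eq_zero_iff (h2 : (2 : F) ≠ 0) {a : F} :
    (quarticDen d).eval a = 0 ↔ a = 0 ∨ a = d ∨ 2 * a = d := by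
  simp [eval_quarticDen, h2, sub_eq_zero, or_assoc]

theorem natDegree_quarticDen_lt_natDegree_quarticNum (h2 : (2 : F) ≠ 0) :
    (quarticDen d).natDegree < (quarticNum d).natDegree := by
  have h4 : (4 : F) ≠ 0 := by
    simpa [show (4 : F) = 2 * 2 by norm_num] using h2
  have hnum : (quarticNum d).natDegree = 4 := by
    unfold quarticNum
    compute_degree!
  have hden : (quarticDen d).natDegree ≤ 3 := by
    unfold quarticDen
    compute_degree
  lia

theorem eval_quarticNum_ne_zero_or_eval_quarticDen_ne_zero (h2 : (2 : F) ≠ 0) (hd : d ≠ 0)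
    (a : F) : (quarticNum d).eval a ≠ 0 ∨ (quarticDen d).eval a ≠ 0 := by
  have hd4 : d ^ 4 ≠ 0 := pow_ne_zero 4 hd
  rw [or_iff_not_imp_right, not_not, eval_quarticDen_eq_zero_iff h2, eval_quarticNum]
  rintro (rfl | rfl | rfl) h
  · exact hd4 (by linear_combination -h)
  · exact hd4 (by linear_combination -h)
  · exact hd4 (by linear_combination 4 * h)

variable [DecidableEq F]

variable (d) in
/-- The map `P¹(F) → P¹(F)` induced by `quarticNum d / quarticDen d`. -/
noncomputable def quarticMap : OnePoint F → OnePoint F :=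
  ratEval (quarticNum d) (quarticDen d)

theorem quarticMap_infty (h2 : (2 : F) ≠ 0) : quarticMap d ∞ = ∞ :=
  ratEval_none_of_natDegree_lt (natDegree_quarticDen_lt_natDegree_quarticNum h2)

theorem quarticMap_coe_eq_infty_iff (h2 : (2 : F) ≠ 0) (a : F) :
    quarticMap d a = ∞ ↔ a = 0 ∨ a = d ∨ 2 * a = d :=
  (ratEval_some_eq_none_iff a).trans (eval_quarticDen_eq_zero_iff h2)

theorem quarticMap_coe_eq_quarticMap_coe_iff (h2 : (2 : F) ≠ 0) (hd : d ≠ 0) (a b : F) :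
    quarticMap d b = quarticMap d a ↔
      b = a ∨ d ^ 2 = b * (-2 * a + 2 * d) ∨ -d * a + d ^ 2 = b * (-2 * a + d) ∨
        d ^ 2 = a * (-2 * b + 2 * d) := by
  have hcop := eval_quarticNum_ne_zero_or_eval_quarticDen_ne_zero h2 hd
  -- With `σ = quarterTurn h2 hd`, the factors encode `b = a`, `b = σ a`, `b = σ² a` and `a = σ b`,
  -- in the shape that `smul_coe_eq_coe_iff` produces.
  have hfactor : (quarticNum d).eval b * (quarticDen d).eval a -
      (quarticNum d).eval a * (quarticDen d).eval b =
        2 * ((b - a) * (d ^ 2 - b * (-2 * a + 2 * d)) * (-d * a + d ^ 2 - b * (-2 * a + d)) *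
          (d ^ 2 - a * (-2 * b + 2 * d))) := by
    simp only [eval_quarticNum, eval_quarticDen]
    ring
  refine (ratEval_some_eq_ratEval_some_iff (hcop b) (hcop a)).trans ?_
  rw [← sub_eq_zero, hfactor]
  simp only [mul_eq_zero, h2, false_or, sub_eq_zero, or_assoc]

variable (h2 : (2 : F) ≠ 0) (hd : d ≠ 0)

theorem quarticMap_eq_iff (x y : OnePoint F) :
    quarticMap d y = quarticMap d x ↔ y = x ∨ quarterTurn h2 hd • x = y ∨
      quarterTurn h2 hd ^ 2 • x = y ∨ quarterTurn h2 hd • y = x := by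
  have hM := (coe_quarterTurn h2 hd).trans (one_smul F _).symm
  have hM₂ := coe_quarterTurn_sq h2 hd
  have hc₂ : 2 * d ≠ 0 := mul_ne_zero h2 hd
  cases x with
  | infty =>
    cases y with
    | infty => simp
    | coe b =>
      rw [quarticMap_infty h2, quarticMap_coe_eq_infty_iff h2,
        smul_infty_eq_coe_iff one_ne_zero hM, smul_infty_eq_coe_iff hc₂ hM₂,
        smul_coe_eq_infty_iff one_ne_zero hM]
      simp only [coe_ne_infty, Matrix.of_apply, Matrix.cons_val', Matrix.cons_val_zero,
        Matrix.cons_val_fin_one, Matrix.cons_val_one]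
      grind
  | coe a =>
    cases y with
    | infty =>
      rw [quarticMap_infty h2, eq_comm, quarticMap_coe_eq_infty_iff h2,
        smul_coe_eq_infty_iff one_ne_zero hM, smul_coe_eq_infty_iff hc₂ hM₂,
        smul_infty_eq_coe_iff one_ne_zero hM]
      simp only [infty_ne_coe, Matrix.of_apply, Matrix.cons_val', Matrix.cons_val_zero,
        Matrix.cons_val_fin_one, Matrix.cons_val_one]
      grind
    | coe b =>
      rw [quarticMap_coe_eq_quarticMap_coe_iff h2 hd, smul_coe_eq_coe_iff one_ne_zero hM,
        smul_coe_eq_coe_iff hc₂ hM₂, smul_coe_eq_coe_iff one_ne_zero hM]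
      simp

theorem quarticMap_eq_iff_mem_orbit (x y : OnePoint F) :
    quarticMap d y = quarticMap d x ↔
      y ∈ MulAction.orbit (Subgroup.zpowers (quarterTurn h2 hd)) x := by
  refine ⟨fun h ↦ ?_, eq_of_mem_orbit_zpowers fun z ↦ ?_⟩
  · obtain rfl | rfl | rfl | rfl := (quarticMap_eq_iff h2 hd x y).mp h
    · exact MulAction.mem_orbit_self y
    · exact ⟨⟨_, Subgroup.mem_zpowers _⟩, rfl⟩
    · exact ⟨⟨_, Subgroup.npow_mem_zpowers _ 2⟩, rfl⟩
    · exact MulAction.mem_orbit_symm.mp ⟨⟨_, Subgroup.mem_zpowers _⟩, rfl⟩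
  · exact (quarticMap_eq_iff h2 hd z _).mpr (.inr (.inl rfl))

theorem card_fiber_quarticMap_eq_four_iff [Fintype F] (x : OnePoint F) :
    #{y | quarticMap d y = quarticMap d x} = 4 ↔ quarterTurn h2 hd ^ 2 • x ≠ x := by
  classical
  simp_rw [quarticMap_eq_iff_mem_orbit h2 hd]
  rw [card_filter_mem_orbit_zpowers]
  exact period_eq_prime_pow_iff (p := 2) (k := 1) (quarterTurn_pow_four_smul h2 hd x)

include hd in
theorem card_filter_card_fiber_quarticMap_eq_four_mul [Fintype F] (hF : ringChar F ≠ 2) :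
    (#{b | #{x | quarticMap d x = b} = 4} * 4 : ℤ) =
      Fintype.card F - ZMod.χ₄ (Fintype.card F) := by
  have h2 : (2 : F) ≠ 0 := Ring.two_ne_zero hF
  have hfixed : (#{i : F | i ^ 2 = -1} : ℤ) = ZMod.χ₄ (Fintype.card F) + 1 := by
    rw [← quadraticChar_neg_one hF, ← quadraticChar_card_sqrts hF, Set.toFinset_ofPred]
  have hsplit := card_filter_add_card_filter_not (s := (univ : Finset (OnePoint F)))
    (fun x ↦ quarterTurn h2 hd ^ 2 • x = x)
  rw [card_filter_quarterTurn_sq_smul_eq] at hsplit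
  have hcount := card_filter_card_fiber_eq_mul (quarticMap d) 4
  simp_rw [card_fiber_quarticMap_eq_four_iff h2 hd] at hcount
  have hcard : #(univ : Finset (OnePoint F)) = Fintype.card F + 1 := Fintype.card_option
  lia

end QuarticMap

/-- Let `q` be odd, `d ∈ F_q*`, and consider
`h = (4X⁴ - 12d²X² + 8d³X - d⁴)/(2X(X - d)(2X - d))` as a map `P¹(F_q) → P¹(F_q)`.
The number of `b ∈ P¹(F_q)` whose fiber `h⁻¹(b)` has exactly `4` elements equals
`(q+1)/4` if `q ≡ 3 (mod 4)` and `(q-1)/4` if `q ≡ 1 (mod 4)`; in particular `h`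
is `(3,l)`-good with the corresponding `l`. -/
theorem stmt15 {F : Type*} [Field F] [Fintype F] [DecidableEq F]
    (hodd : Odd (Fintype.card F)) (d : F) (hd : d ≠ 0) :
    (Fintype.card F % 4 = 3 →
      (Finset.univ.filter (fun b : Option F =>
        (Finset.univ.filter (fun x : Option F =>
          ratEval (C 4 * X ^ 4 - C (12 * d ^ 2) * X ^ 2 + C (8 * d ^ 3) * X - C (d ^ 4))
            (C 2 * X * (X - C d) * (C 2 * X - C d)) x = b)).card = 4)).card
        = (Fintype.card F + 1) / 4) ∧
    (Fintype.card F % 4 = 1 →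
      (Finset.univ.filter (fun b : Option F =>
        (Finset.univ.filter (fun x : Option F =>
          ratEval (C 4 * X ^ 4 - C (12 * d ^ 2) * X ^ 2 + C (8 * d ^ 3) * X - C (d ^ 4))
            (C 2 * X * (X - C d) * (C 2 * X - C d)) x = b)).card = 4)).card
        = (Fintype.card F - 1) / 4) := by
  have hF : ringChar F ≠ 2 := fun h ↦
    Nat.not_even_iff_odd.mpr hodd (Nat.even_iff.mpr (FiniteField.even_card_of_char_two h))
  have key := card_filter_card_fiber_quarticMap_eq_four_mul hd hF
  set N := #{b | #{x | quarticMap d x = b} = 4}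
  have h3 (h : Fintype.card F % 4 = 3) : N = (Fintype.card F + 1) / 4 := by
    rw [ZMod.χ₄_nat_three_mod_four h] at key
    omega
  have h1 (h : Fintype.card F % 4 = 1) : N = (Fintype.card F - 1) / 4 := by
    rw [ZMod.χ₄_nat_one_mod_four h] at key
    omega
  exact ⟨h3, h1⟩
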